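/- Let γ > 0, Z(t) = e^{γt}, Z_η(t) = e^{(1−η)γt} with η ∈ [0,1), 0 ≤ b < 3, c₁ ≥ 1, and t₀ ≥ 0. Suppose symmetric matrix-valued functions g^{ab}(t), k^{ab}(t) on [t₀,T] are continuous and satisfy, for all t ∈ [t₀,T] and p ∈ ℝ³: (1/c₁)|p|² ≤ Z(t)² g^{ab}(t)p_a p_b ≤ c₁|p|², max|k^{ab}(t)| ≤ c₁ Z(t)^{−2}, H(t) ≥ γ and F(t) ≤ η²/4. Let f₀ ≥ 0 with ‖f₀‖_{L^∞_m} ≤ B for some m ≥ 0, and let (f_n)_{n≥0} be the standard iteration for the weighted Boltzmann equation: f_0(t,p) = f₀(p), and f_{n+1} is the (nonnegative, continuous) solution of ∂_t f_{n+1}(t,p) + λ_η(t,p) f_{n+1}(t,p) = (det g(t))^{−1/2} ∫_{ℝ³}∫_{𝕊²} (h^{1−b}√s/(p⁰q⁰)) ( f_n(t,p') f_n(t,q') − f_{n+1}(t,p) f_n(t,q) ) w(t,q)^{−1} dω dq with f_{n+1}(t₀,·) = f₀. Then for every C₂ > 1 there exists T₁ ∈ (t₀,T] such that sup_{t₀ ≤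 s ≤ T₁} ‖f_n(s)‖_{L^∞_m} ≤ C₂ B for all n. -/

import Mathlib

open Matrix Real MeasureTheory Set

noncomputable section

/-- 3×3 real matrices. -/
abbrev Mat3 := Matrix (Fin 3) (Fin 3) ℝ
/-- Momentum vectors in ℝ³. -/
abbrev V3 := Fin 3 → ℝ

/-- The quadratic form `g^{ab} p_a p_b = pᵀ G p`. -/
def quadG (G : Mat3) (p : V3) : ℝ := p ⬝ᵥ G *ᵥ p

/-- The quadratic form `k^{ab} p_a p_b`. -/
def quadK (K : Mat3) (p : V3) : ℝ := p ⬝ᵥ K *ᵥ p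

/-- Squared Euclidean norm `|p|²`. -/
def enorm2 (p : V3) : ℝ := ∑ i, p i ^ 2

/-- The Japanese bracket `⟨p⟩ = √(1+|p|²)`. -/
def jap (p : V3) : ℝ := Real.sqrt (1 + enorm2 p)

/-- The particle energy `p⁰ = √(1 + g^{ab} p_a p_b)`. -/
def p0 (G : Mat3) (p : V3) : ℝ := Real.sqrt (1 + quadG G p)

/-- The relative momentum `h = √(−(p⁰−q⁰)² + g^{ab}(p_a−q_a)(p_b−q_b))`. -/
def hrel (G : Mat3) (p q : V3) : ℝ :=
  Real.sqrt (-(p0 G p - p0 G q) ^ 2 + quadG G (p - q))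

/-- `s = (p⁰+q⁰)² − g^{ab}(p_a+q_a)(p_b+q_b)`. -/
def sCM (G : Mat3) (p q : V3) : ℝ :=
  (p0 G p + p0 G q) ^ 2 - quadG G (p + q)

/-- `Z(t) = e^{γt}`. -/
def Zfun (γ t : ℝ) : ℝ := Real.exp (γ * t)

/-- `Z_η(t) = e^{(1−η)γt}`. -/
def Zeta (γ η t : ℝ) : ℝ := Real.exp ((1 - η) * γ * t)

/-- The inverse weight `w(q)⁻¹ = exp(−Z_η(q⁰−1))`. -/
def winv (G : Mat3) (Zη : ℝ) (q : V3) : ℝ := Real.exp (-(Zη * (p0 G q - 1)))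

/-- The explicit lower-triangular orthonormal frame `(eⁱ_a)` of the metric `G = (g^{ab})`,
satisfying `eⁱ_a eʲ_b g^{ab} = δⁱʲ`. -/
def frameE (G : Mat3) : Mat3 :=
  !![1 / Real.sqrt (G 0 0), 0, 0;
     -(G 0 1) / Real.sqrt (G 0 0 * (G 0 0 * G 1 1 - G 0 1 ^ 2)),
     G 0 0 / Real.sqrt (G 0 0 * (G 0 0 * G 1 1 - G 0 1 ^ 2)), 0;
     (G 0 1 * G 1 2 - G 0 2 * G 1 1) / Real.sqrt ((G 0 0 * G 1 1 - G 0 1 ^ 2) * G.det),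
     (-(G 0 0) * G 1 2 + G 0 1 * G 0 2) / Real.sqrt ((G 0 0 * G 1 1 - G 0 1 ^ 2) * G.det),
     (G 0 0 * G 1 1 - G 0 1 ^ 2) / Real.sqrt ((G 0 0 * G 1 1 - G 0 1 ^ 2) * G.det)]

/-- `ω_i eⁱ_a`, i.e. the vector `(e⁻¹)ᵀ ω`. -/
def eoV (G : Mat3) (ω : V3) : V3 := (frameE G)ᵀ *ᵥ ω

/-- The coefficient in the relativistic parametrization of post-collision momenta:
`a = −q⁰(n^a ω_i eⁱ_a)/√s + q^a ω_i eⁱ_a + (n^a ω_i eⁱ_a)(n_b q^b)/(√s(n⁰+√s))`,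
where `n = p + q` and `n⁰ = p⁰ + q⁰`. -/
def aCoef (G : Mat3) (p q ω : V3) : ℝ :=
  -(p0 G q) * ((G *ᵥ (p + q)) ⬝ᵥ eoV G ω) / Real.sqrt (sCM G p q)
    + (G *ᵥ q) ⬝ᵥ eoV G ω
    + ((G *ᵥ (p + q)) ⬝ᵥ eoV G ω) * ((p + q) ⬝ᵥ G *ᵥ q)
      / (Real.sqrt (sCM G p q) * (p0 G p + p0 G q + Real.sqrt (sCM G p q)))

/-- The direction vector `ω_j eʲ_d + (n^c ω_j eʲ_c) n_d/(√s(n⁰+√s))`. -/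
def dirVec (G : Mat3) (p q ω : V3) : V3 := fun d =>
  eoV G ω d + ((G *ᵥ (p + q)) ⬝ᵥ eoV G ω) * (p + q) d
    / (Real.sqrt (sCM G p q) * (p0 G p + p0 G q + Real.sqrt (sCM G p q)))

/-- The post-collision momentum `p'`. -/
def pPost (G : Mat3) (p q ω : V3) : V3 :=
  fun d => p d + 2 * aCoef G p q ω * dirVec G p q ω d

/-- The post-collision momentum `q'`. -/
def qPost (G : Mat3) (p q ω : V3) : V3 :=
  fun d => q d - 2 * aCoef G p q ω * dirVec G p q ω d

/-- The unit sphere `𝕊² ⊂ ℝ³`. -/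
abbrev Sph := Metric.sphere (0 : EuclideanSpace ℝ (Fin 3)) 1

/-- The surface measure on the unit sphere. -/
def sphMeasure : Measure Sph := (volume : Measure (EuclideanSpace ℝ (Fin 3))).toSphere

/-- A point of the sphere, viewed as a vector of `ℝ³`. -/
def sphV (ω : Sph) : V3 := fun i => (ω : EuclideanSpace ℝ (Fin 3)) i

/-- The collision kernel `h^{1−b} √s/(p⁰ q⁰)` for the soft potential `σ(h,ω) = h^{−b}`. -/
def collKer (G : Mat3) (b : ℝ) (p q : V3) : ℝ :=
  hrel G p q ^ (1 - b) * Real.sqrt (sCM G p q) / (p0 G p * p0 G q)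

/-- The collision operator `Γ(f,f)` of the weighted Boltzmann equation. -/
def GammaOp (G : Mat3) (Zη b : ℝ) (f : V3 → ℝ) (p : V3) : ℝ :=
  Real.sqrt G.det * ∫ q : V3,
    (∫ ω : Sph, collKer G b p q *
        (f (pPost G p q (sphV ω)) * f (qPost G p q (sphV ω)) - f p * f q) ∂sphMeasure)
      * winv G Zη q

/-- The mixed collision operator used in the iteration for the Boltzmann equation, where
the loss term contains the value `fval` of the next iterate at `p`. -/
def GammaIter (G : Mat3) (Zη b : ℝ) (fn : V3 → ℝ) (fval : ℝ) (p : V3) : ℝ :=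
  Real.sqrt G.det * ∫ q : V3,
    (∫ ω : Sph, collKer G b p q *
        (fn (pPost G p q (sphV ω)) * fn (qPost G p q (sphV ω)) - fval * fn q) ∂sphMeasure)
      * winv G Zη q

/-- The energy density `ρ = (det g)^{−1/2} ∫ f p⁰ w⁻¹ dp`. -/
def rhoT (G : Mat3) (Zη : ℝ) (f : V3 → ℝ) : ℝ :=
  Real.sqrt G.det * ∫ p : V3, f p * p0 G p * winv G Zη p

/-- The stress `S^{ab} = (det g)^{−1/2} ∫ f p^a p^b/p⁰ w⁻¹ dp`. -/
def SupT (G : Mat3) (Zη : ℝ) (f : V3 → ℝ) : Mat3 :=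
  Matrix.of fun a b =>
    Real.sqrt G.det * ∫ p : V3, f p * ((G *ᵥ p) a * (G *ᵥ p) b / p0 G p) * winv G Zη p

/-- The trace `S = g_{ab}S^{ab} = (det g)^{−1/2} ∫ f g^{ab}p_ap_b/p⁰ w⁻¹ dp`. -/
def StrT (G : Mat3) (Zη : ℝ) (f : V3 → ℝ) : ℝ :=
  Real.sqrt G.det * ∫ p : V3, f p * (quadG G p / p0 G p) * winv G Zη p

/-- The trace `k = g_{ab} k^{ab}`. -/
def trK (G K : Mat3) : ℝ := ∑ a, ∑ b, G⁻¹ a b * K a b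

/-- The Hubble scalar `H = (1/3) g_{ab} k^{ab}`. -/
def Hub (G K : Mat3) : ℝ := (1 / 3) * trK G K

/-- The shear `σ^{ab} = k^{ab} − H g^{ab}`. -/
def shearUp (G K : Mat3) : Mat3 := K - Hub G K • G

/-- `σ_{ab} σ^{ab}` with `σ_{ab} = g_{ac}g_{bd}σ^{cd}`. -/
def shearSq (G K : Mat3) : ℝ :=
  ∑ a, ∑ b, (G⁻¹ * shearUp G K * G⁻¹) a b * shearUp G K a b

/-- The shear variable `F = σ_{ab}σ^{ab}/(4H²)`. -/
def Fvar (G K : Mat3) : ℝ := shearSq G K / (4 * Hub G K ^ 2)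

/-- `λ_η(p) = −((1−η)γ(p⁰−1) − k^{ab}p_a p_b/p⁰) Z_η`. -/
def lamEta (G K : Mat3) (γ η Zη : ℝ) (p : V3) : ℝ :=
  -((1 - η) * γ * (p0 G p - 1) - quadK K p / p0 G p) * Zη

/-- The right hand side of the evolution equation for `k^{ab}`:
`−2k^a_c k^{bc} − k k^{ab} + S^{ab} + (1/2)(ρ−S)g^{ab} + Λ g^{ab}`. -/
def kEvol (Λ Zη : ℝ) (G K : Mat3) (f : V3 → ℝ) : Mat3 :=
  (-2 : ℝ) • (K * G⁻¹ * K) - trK G K • K + SupT G Zη f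
    + ((1 / 2) * (rhoT G Zη f - StrT G Zη f)) • G + Λ • G

/-- The Hamiltonian constraint `−k_{ab}k^{ab} + k² = 2ρ + 2Λ`. -/
def ConstraintEq (Λ ρ : ℝ) (G K : Mat3) : Prop :=
  -(∑ a, ∑ b, (G⁻¹ * K * G⁻¹) a b * K a b) + trK G K ^ 2 = 2 * ρ + 2 * Λ

theorem quadG_add_smul {G : Mat3} (hs : G.IsSymm) (p d : V3) (c : ℝ) :
    quadG G (p + c • d) = quadG G p + 2 * c * (p ⬝ᵥ G *ᵥ d) + c ^ 2 * quadG G d := by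
  have h01 := hs.apply 0 1
  have h02 := hs.apply 0 2
  have h12 := hs.apply 1 2
  simp only [quadG, dotProduct, mulVec, Fin.sum_univ_three, Pi.add_apply, Pi.smul_apply,
    smul_eq_mul, h01, h02, h12]
  ring

theorem bilin_comm {G : Mat3} (hs : G.IsSymm) (p q : V3) :
    p ⬝ᵥ G *ᵥ q = q ⬝ᵥ G *ᵥ p := by
  have h01 := hs.apply 0 1
  have h02 := hs.apply 0 2
  have h12 := hs.apply 1 2
  simp only [dotProduct, mulVec, Fin.sum_univ_three, h01, h02, h12]
  ring

theorem bilin_sq_le {G : Mat3} (hs : G.IsSymm) (hG : ∀ p, 0 ≤ quadG G p) (p q : V3) :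
    (p ⬝ᵥ G *ᵥ q) ^ 2 ≤ quadG G p * quadG G q := by
  have h : ∀ x : ℝ, 0 ≤ quadG G q * (x * x) + 2 * (p ⬝ᵥ G *ᵥ q) * x + quadG G p := by
    intro x
    have := hG (p + x • q)
    rw [quadG_add_smul hs] at this
    linarith
  have := discrim_le_zero h
  rw [discrim] at this
  linarith

theorem quadG_sub {G : Mat3} (hs : G.IsSymm) (p q : V3) :
    quadG G (p - q) = quadG G p - 2 * (p ⬝ᵥ G *ᵥ q) + quadG G q := by
  have := quadG_add_smul hs p q (-1)
  rw [neg_one_smul, ← sub_eq_add_neg] at this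
  rw [this]; ring

theorem quadG_add {G : Mat3} (hs : G.IsSymm) (p q : V3) :
    quadG G (p + q) = quadG G p + 2 * (p ⬝ᵥ G *ᵥ q) + quadG G q := by
  have := quadG_add_smul hs p q 1
  rw [one_smul] at this
  rw [this]; ring

theorem quadG_vec (G : Mat3) (hs : G.IsSymm) (x y z : ℝ) :
    quadG G ![x, y, z] = G 0 0 * x ^ 2 + G 1 1 * y ^ 2 + G 2 2 * z ^ 2
      + 2 * G 0 1 * x * y + 2 * G 0 2 * x * z + 2 * G 1 2 * y * z := by
  have h01 := hs.apply 0 1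
  have h02 := hs.apply 0 2
  have h12 := hs.apply 1 2
  simp [quadG, dotProduct, mulVec, Fin.sum_univ_three, h01, h02, h12]
  ring

theorem quadG_eoV {G : Mat3} (hs : G.IsSymm) (hG : ∀ p, p ≠ 0 → 0 < quadG G p) (ω : V3) :
    quadG G (eoV G ω) = enorm2 ω := by
  have h01 := hs.apply 0 1
  have h02 := hs.apply 0 2
  have h12 := hs.apply 1 2
  have h0 : 0 < G 0 0 := by
    have := hG ![1, 0, 0] (fun h => by simpa using congrFun h 0)
    rw [quadG_vec G hs] at this
    linarith
  have h1 : 0 < G 0 0 * G 1 1 - G 0 1 ^ 2 := by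
    have := hG ![-G 0 1, G 0 0, 0] (fun h => by
      have := congrFun h 1
      simp at this
      exact h0.ne' this)
    rw [quadG_vec G hs] at this
    refine pos_of_mul_pos_right (a := G 0 0) ?_ h0.le
    linarith
  have hdet : G.det = G 0 0 * G 1 1 * G 2 2 - G 0 0 * G 1 2 ^ 2 - G 0 1 ^ 2 * G 2 2
      + 2 * G 0 1 * G 1 2 * G 0 2 - G 0 2 ^ 2 * G 1 1 := by
    rw [Matrix.det_fin_three, h01, h02, h12]; ring
  have h2 : 0 < G.det := by
    have := hG ![G 0 1 * G 1 2 - G 0 2 * G 1 1, -(G 0 0) * G 1 2 + G 0 1 * G 0 2,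
      G 0 0 * G 1 1 - G 0 1 ^ 2] (fun h => by
      have := congrFun h 2
      simp at this
      exact h1.ne' this)
    rw [quadG_vec G hs] at this
    refine pos_of_mul_pos_right (a := G 0 0 * G 1 1 - G 0 1 ^ 2) ?_ h1.le
    rw [hdet]
    linarith
  have ha : 0 < √(G 0 0) := Real.sqrt_pos.2 h0
  have hb : 0 < √(G 0 0 * (G 0 0 * G 1 1 - G 0 1 ^ 2)) := Real.sqrt_pos.2 (by positivity)
  have hc : 0 < √((G 0 0 * G 1 1 - G 0 1 ^ 2) * G.det) := Real.sqrt_pos.2 (by positivity)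
  have ha2 : √(G 0 0) ^ 2 = G 0 0 := Real.sq_sqrt h0.le
  have hb2 : √(G 0 0 * (G 0 0 * G 1 1 - G 0 1 ^ 2)) ^ 2 = _ := Real.sq_sqrt (by positivity)
  have hc2 : √((G 0 0 * G 1 1 - G 0 1 ^ 2) * G.det) ^ 2 = _ := Real.sq_sqrt (by positivity)
  set A := √(G 0 0)
  set B := √(G 0 0 * (G 0 0 * G 1 1 - G 0 1 ^ 2))
  set C := √((G 0 0 * G 1 1 - G 0 1 ^ 2) * G.det)
  set e0 : V3 := ![1 / A, 0, 0]
  set e1 : V3 := ![-G 0 1 / B, G 0 0 / B, 0]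
  set e2 : V3 := ![(G 0 1 * G 1 2 - G 0 2 * G 1 1) / C, (-(G 0 0) * G 1 2 + G 0 1 * G 0 2) / C,
      (G 0 0 * G 1 1 - G 0 1 ^ 2) / C]
  have hv : eoV G ω = (ω 0 • e0 + ω 1 • e1) + ω 2 • e2 := by
    ext i
    fin_cases i <;> simp [eoV, frameE, mulVec, dotProduct, Fin.sum_univ_three, e0, e1, e2, A, B, C]
      <;> ring
  have q0 : quadG G e0 = 1 := by
    rw [quadG_vec G hs]; field_simp; rw [ha2]; ring
  have q1 : quadG G e1 = 1 := by
    rw [quadG_vec G hs]; field_simp; rw [hb2]; ring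
  have q2 : quadG G e2 = 1 := by
    rw [quadG_vec G hs]; field_simp; rw [hc2, hdet]; ring
  have b01 : e0 ⬝ᵥ G *ᵥ e1 = 0 := by
    simp [e0, e1, dotProduct, mulVec, Fin.sum_univ_three]; right; field_simp; ring
  have b02 : e0 ⬝ᵥ G *ᵥ e2 = 0 := by
    simp [e0, e2, dotProduct, mulVec, Fin.sum_univ_three]; right; field_simp; ring
  have b12 : e1 ⬝ᵥ G *ᵥ e2 = 0 := by
    simp [e1, e2, dotProduct, mulVec, Fin.sum_univ_three, h01]; field_simp; ring
  have b : (ω 0 • e0 + ω 1 • e1) ⬝ᵥ G *ᵥ e2 = 0 := by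
    rw [add_dotProduct, smul_dotProduct, smul_dotProduct, b02, b12]; simp
  have q00 : quadG G (ω 0 • e0) = ω 0 ^ 2 := by
    have := quadG_add_smul hs 0 e0 (ω 0)
    rw [zero_add, q0] at this
    rw [this]; simp [quadG]
  rw [hv, quadG_add_smul hs, quadG_add_smul hs, b, q1, q2, q00, smul_dotProduct, b01, enorm2,
    Fin.sum_univ_three]
  simp

theorem one_add_bilin_le {G : Mat3} (hs : G.IsSymm) (hG : ∀ p, 0 ≤ quadG G p) (p q : V3) :
    1 + p ⬝ᵥ G *ᵥ q ≤ p0 G p * p0 G q := by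
  rw [p0, p0, ← Real.sqrt_mul (by linarith [hG p])]
  apply Real.le_sqrt_of_sq_le
  have h1 := bilin_sq_le hs hG p q
  have h2 := hG (p - q)
  rw [quadG_sub hs] at h2
  nlinarith

theorem p0_sq {G : Mat3} (hG : ∀ p, 0 ≤ quadG G p) (p : V3) : p0 G p ^ 2 = 1 + quadG G p :=
  Real.sq_sqrt (by linarith [hG p])

theorem one_le_p0 {G : Mat3} (hG : ∀ p, 0 ≤ quadG G p) (p : V3) : 1 ≤ p0 G p :=
  Real.one_le_sqrt.2 (by linarith [hG p])

theorem sCM_eq {G : Mat3} (hs : G.IsSymm) (hG : ∀ p, 0 ≤ quadG G p) (p q : V3) :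
    sCM G p q = 2 + 2 * (p0 G p * p0 G q - p ⬝ᵥ G *ᵥ q) := by
  rw [sCM, quadG_add hs]
  linarith [p0_sq hG p, p0_sq hG q]

theorem four_le_sCM {G : Mat3} (hs : G.IsSymm) (hG : ∀ p, 0 ≤ quadG G p) (p q : V3) :
    4 ≤ sCM G p q := by
  rw [sCM_eq hs hG]
  linarith [one_add_bilin_le hs hG p q]

/-- The collision does not decrease the total energy. -/
theorem p0_add_p0_le_post {G : Mat3} (hs : G.IsSymm) (hG : ∀ p, 0 ≤ quadG G p) (p q ω : V3)
    (hv : quadG G (eoV G ω) = 1) :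
    p0 G p + p0 G q ≤ p0 G (pPost G p q ω) + p0 G (qPost G p q ω) := by
  have hP := p0_sq hG p
  have hQ := p0_sq hG q
  have hP1 := one_le_p0 hG p
  have hQ1 := one_le_p0 hG q
  have hs4 := four_le_sCM hs hG p q
  have hr : 0 < √(sCM G p q) := Real.sqrt_pos.2 (by linarith)
  have hr2 : √(sCM G p q) ^ 2 = (p0 G p + p0 G q) ^ 2 - quadG G (p + q) :=
    Real.sq_sqrt (by linarith)
  have hcomm : (G *ᵥ (p + q)) ⬝ᵥ eoV G ω = (p + q) ⬝ᵥ G *ᵥ eoV G ω := by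
    rw [dotProduct_comm, bilin_comm hs]
  have hcomm2 : (G *ᵥ q) ⬝ᵥ eoV G ω = q ⬝ᵥ G *ᵥ eoV G ω := by
    rw [dotProduct_comm, bilin_comm hs]
  have hcomm3 : (p + q) ⬝ᵥ G *ᵥ q = q ⬝ᵥ G *ᵥ (p + q) := bilin_comm hs _ _
  set v := eoV G ω with hvdef
  set P := p0 G p
  set Q := p0 G q
  set r := √(sCM G p q) with hrdef
  set ν := (p + q) ⬝ᵥ G *ᵥ v with hν
  set κ := ν / (r * (P + Q + r)) with hκ
  have hden : 0 < P + Q + r := by linarith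
  have hd : dirVec G p q ω = v + κ • (p + q) := by
    ext i
    simp only [dirVec, ← hvdef, hcomm, Pi.add_apply, Pi.smul_apply, smul_eq_mul, ← hrdef, hκ]
    ring
  set d := dirVec G p q ω
  have hbq : q ⬝ᵥ G *ᵥ d = q ⬝ᵥ G *ᵥ v + κ * (q ⬝ᵥ G *ᵥ (p + q)) := by
    rw [hd, mulVec_add, mulVec_smul, dotProduct_add, dotProduct_smul, smul_eq_mul]
  have hbn : (p + q) ⬝ᵥ G *ᵥ d = (P + Q) * (ν / r) := by
    rw [hd, mulVec_add, mulVec_smul, dotProduct_add, dotProduct_smul, smul_eq_mul]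
    change ν + κ * quadG G (p + q) = _
    have : quadG G (p + q) = (P + Q) ^ 2 - r ^ 2 := by linarith
    rw [this, hκ]
    field_simp
    ring
  have hdd : quadG G d = 1 + (ν / r) ^ 2 := by
    rw [hd, quadG_add_smul hs, hv, bilin_comm hs, ← hν]
    have : quadG G (p + q) = (P + Q) ^ 2 - r ^ 2 := by linarith
    rw [this, hκ]
    field_simp
    ring
  have ha : aCoef G p q ω = q ⬝ᵥ G *ᵥ d - Q * (ν / r) := by
    rw [hbq]
    simp only [aCoef, ← hvdef, hcomm, hcomm2, hcomm3, ← hrdef, hκ]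
    ring
  have hbp : p ⬝ᵥ G *ᵥ d = P * (ν / r) - aCoef G p q ω := by
    rw [add_dotProduct] at hbn
    rw [ha]; linarith
  set a := aCoef G p q ω
  have hp' : pPost G p q ω = p + (2 * a) • d := by
    ext i; simp [pPost, a, d]
  have hq' : qPost G p q ω = q + (-(2 * a)) • d := by
    ext i; simp [qPost, a, d]; ring
  have e1 : P + 2 * a * (ν / r) ≤ p0 G (pPost G p q ω) := by
    apply Real.le_sqrt_of_sq_le
    rw [hp', quadG_add_smul hs, hdd, hbp]
    nlinarith
  have e2 : Q - 2 * a * (ν / r) ≤ p0 G (qPost G p q ω) := by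
    apply Real.le_sqrt_of_sq_le
    rw [hq', quadG_add_smul hs, hdd, show q ⬝ᵥ G *ᵥ d = Q * (ν / r) + a by linarith]
    nlinarith
  linarith

theorem integrable_truncated_rpow_norm {b : ℝ} (hb3 : b < 3) :
    Integrable (fun x : V3 => (Iio (1 : ℝ)).indicator (fun r => r ^ (1 - b)) ‖x‖) := by
  have h := (integrableOn_fun_norm_addHaar (volume : Measure V3) (r := 1)
    (f := fun r : ℝ => r ^ (1 - b))).2 (by
      have h3 := (intervalIntegral.integrableOn_Ioo_rpow_iff (s := 3 - b) (t := 1)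
        one_pos).2 (by linarith)
      refine h3.congr_fun (fun y hy => ?_) measurableSet_Ioo
      simp only [Module.finrank_fintype_fun_eq_card, Fintype.card_fin, smul_eq_mul]
      rw [← Real.rpow_natCast, ← Real.rpow_add hy.1]
      norm_num
      ring_nf)
  rw [← integrable_indicator_iff measurableSet_ball] at h
  refine h.congr (Filter.Eventually.of_forall fun x => ?_)
  simp [indicator]

theorem norm_sq_le_enorm2 (p : V3) : ‖p‖ ^ 2 ≤ enorm2 p := by
  have h : ‖p‖ ≤ √(enorm2 p) := by
    refine (pi_norm_le_iff_of_nonneg (Real.sqrt_nonneg _)).2 fun i => ?_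
    rw [Real.norm_eq_abs]
    apply Real.abs_le_sqrt
    exact Finset.single_le_sum (f := fun i => p i ^ 2) (fun j _ => sq_nonneg _)
      (Finset.mem_univ i)
  calc ‖p‖ ^ 2 ≤ √(enorm2 p) ^ 2 := by gcongr
    _ = enorm2 p := Real.sq_sqrt (Finset.sum_nonneg fun _ _ => sq_nonneg _)

theorem mul_exp_le {ε Q r : ℝ} (hε : 0 < ε) (hε1 : ε ≤ 1) (hr : 0 ≤ r) (hQ : 0 ≤ Q)
    (hQr : 1 + ε * r ^ 2 ≤ Q ^ 2) :
    Q * Real.exp (-(Q - 1)) ≤ (120 * Real.exp 1 * (4 / ε ^ 2)) * (1 + r) ^ (-(4 : ℝ)) := by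
  have h1 : Q ^ 5 / 120 ≤ Real.exp Q := by
    have := Real.pow_div_factorial_le_exp (x := Q) hQ 5
    norm_num [Nat.factorial] at this
    exact this
  have h2 : ε / 2 * (1 + r) ^ 2 ≤ Q ^ 2 := by nlinarith [sq_nonneg (r - 1)]
  have h3 : ε ^ 2 / 4 * (1 + r) ^ 4 ≤ Q ^ 4 := by
    have h := pow_le_pow_left₀ (by positivity) h2 2
    calc _ = (ε / 2 * (1 + r) ^ 2) ^ 2 := by ring
      _ ≤ (Q ^ 2) ^ 2 := h
      _ = Q ^ 4 := by ring
  have he : Real.exp (-(Q - 1)) = Real.exp 1 / Real.exp Q := by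
    rw [← Real.exp_sub]; congr 1; ring
  have hp : (1 + r) ^ (-(4 : ℝ)) = ((1 + r) ^ 4)⁻¹ := by
    rw [Real.rpow_neg (by positivity)]
    norm_cast
  rw [he, hp, ← div_eq_mul_inv, mul_div_assoc', div_le_div_iff₀ (Real.exp_pos _) (by positivity)]
  have h4 : Q * (ε ^ 2 / 4 * (1 + r) ^ 4) ≤ 120 * Real.exp Q := by
    calc _ ≤ Q * Q ^ 4 := by gcongr
      _ = 120 * (Q ^ 5 / 120) := by ring
      _ ≤ _ := by gcongr
  have h5 : Q * (1 + r) ^ 4 ≤ 120 * (4 / ε ^ 2) * Real.exp Q := by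
    have : Q * (1 + r) ^ 4 = 4 / ε ^ 2 * (Q * (ε ^ 2 / 4 * (1 + r) ^ 4)) := by
      field_simp
    rw [this]
    calc _ ≤ 4 / ε ^ 2 * (120 * Real.exp Q) := by gcongr
      _ = _ := by ring
  calc _ = Real.exp 1 * (Q * (1 + r) ^ 4) := by ring
    _ ≤ Real.exp 1 * (120 * (4 / ε ^ 2) * Real.exp Q) := by gcongr
    _ = _ := by ring

theorem le_two_mul_mul_sub {P Q X Y β : ℝ} (hX : 0 ≤ X) (hY : 0 ≤ Y) (hP : 1 ≤ P) (hQ : 1 ≤ Q)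
    (hP2 : P ^ 2 = 1 + X) (hQ2 : Q ^ 2 = 1 + Y) (hβ : β ^ 2 ≤ X * Y) :
    P ≤ 2 * Q * (P * Q - β) := by
  have hβP : β ≤ P * √Y := by
    have : |β| ≤ P * √Y := by
      apply abs_le_of_sq_le_sq _ (by positivity)
      rw [mul_pow, Real.sq_sqrt hY]
      nlinarith
    exact (abs_le.1 this).2
  have hY2 := Real.sq_sqrt hY
  have hYQ : √Y ≤ Q := by
    apply Real.sqrt_le_iff.2; constructor <;> linarith
  have : 1 ≤ 2 * Q * (Q - √Y) := by nlinarith [Real.sqrt_nonneg Y]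
  have : P * 1 ≤ P * (2 * Q * (Q - √Y)) := by gcongr
  have h4 : 2 * Q * β ≤ 2 * Q * (P * √Y) := by gcongr
  linarith

theorem abs_le_mul_sub_one {P Q X Y β : ℝ} (hX : 0 ≤ X) (hY : 0 ≤ Y) (hP : 1 ≤ P) (hQ : 1 ≤ Q)
    (hP2 : P ^ 2 = 1 + X) (hQ2 : Q ^ 2 = 1 + Y) (hβ : β ^ 2 ≤ X * Y) : |β| ≤ P * Q - 1 := by
  have hPQ1 : 1 ≤ P * Q := one_le_mul_of_one_le_of_one_le hP hQ
  apply abs_le_of_sq_le_sq _ (by linarith)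
  obtain rfl : X = P ^ 2 - 1 := by linarith
  obtain rfl : Y = Q ^ 2 - 1 := by linarith
  linarith [sq_nonneg (P - Q)]

theorem sub_le_two_mul_mul {P Q X Y β : ℝ} (hP2 : P ^ 2 = 1 + X) (hQ2 : Q ^ 2 = 1 + Y)
    (hβ : β ^ 2 ≤ X * Y) :
    X + Y - 2 * β ≤ 2 * (P * Q - 1 - β) * (P * Q) := by
  obtain rfl : X = P ^ 2 - 1 := by linarith
  obtain rfl : Y = Q ^ 2 - 1 := by linarith
  linarith [sq_nonneg (P * Q - 1 - β)]

theorem kernel_le {P Q X Y β b x ε : ℝ} (hb3 : b < 3) (hb0 : 0 ≤ b)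
    (hx0 : x = 0 → P * Q = 1 + β) (hX : 0 ≤ X) (hY : 0 ≤ Y) (hP : 1 ≤ P) (hQ : 1 ≤ Q) (hP2 : P ^ 2 = 1 + X)
    (hQ2 : Q ^ 2 = 1 + Y) (hβ : β ^ 2 ≤ X * Y) (hβ1 : 1 + β ≤ P * Q) (hε : 0 < ε)
    (hx : 0 ≤ x) (hD : ε * x ^ 2 ≤ X + Y - 2 * β) :
    √(2 * (P * Q - 1 - β)) ^ (1 - b) * √(2 + 2 * (P * Q - β)) / (P * Q) ≤
      (4 + 4 * √ε ^ (1 - b)) * Q * (1 + (Iio (1 : ℝ)).indicator (fun r => r ^ (1 - b)) x) := by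
  set h := √(2 * (P * Q - 1 - β)) with hh
  set s := √(2 + 2 * (P * Q - β)) with hsdef
  have hh2 : h ^ 2 = 2 * (P * Q - 1 - β) := Real.sq_sqrt (by linarith)
  have hs2 : s ^ 2 = 2 + 2 * (P * Q - β) := Real.sq_sqrt (by linarith)
  have hh0 : 0 ≤ h := Real.sqrt_nonneg _
  have hs0 : 0 ≤ s := Real.sqrt_nonneg _
  have hψ : 0 ≤ (Iio (1 : ℝ)).indicator (fun r => r ^ (1 - b)) x := by
    rw [indicator_apply]; split_ifs
    · exact Real.rpow_nonneg hx _
    · exact le_rfl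
  set ψ := (Iio (1 : ℝ)).indicator (fun r : ℝ => r ^ (1 - b)) x with hψd
  have he0 : 0 < √ε ^ (1 - b) := Real.rpow_pos_of_pos (Real.sqrt_pos.2 hε) _
  have hPQ1 : 1 ≤ P * Q := one_le_mul_of_one_le_of_one_le hP hQ
  have hβPQ := abs_le_mul_sub_one hX hY hP hQ hP2 hQ2 hβ
  have hβneg : -(P * Q - 1) ≤ β := (abs_le.1 hβPQ).1
  have hs4 : s ^ 2 ≤ 4 * (P * Q) := by linarith
  have hhs : h ≤ s := Real.sqrt_le_sqrt (by linarith)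
  have hs2' : 2 ≤ s := by
    apply Real.le_sqrt_of_sq_le; linarith
  have hfour : ∀ y, y ≤ 4 * (P * Q) → y / (P * Q) ≤ (4 + 4 * √ε ^ (1 - b)) * Q * (1 + ψ) := by
    intro y hy
    calc y / (P * Q) ≤ 4 := by rw [div_le_iff₀ (by positivity)]; exact hy
      _ = 4 * 1 * 1 := by ring
      _ ≤ (4 + 4 * √ε ^ (1 - b)) * Q * (1 + ψ) := by
        gcongr <;> linarith
  rcases le_or_gt b 1 with hb | hb
  · apply hfour
    refine le_trans ?_ hs4
    have : h ^ (1 - b) ≤ s := by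
      calc h ^ (1 - b) ≤ s ^ (1 - b) := Real.rpow_le_rpow hh0 hhs (by linarith)
        _ ≤ s ^ (1 : ℝ) := Real.rpow_le_rpow_of_exponent_le (by linarith) (by linarith)
        _ = s := Real.rpow_one s
    nlinarith
  rcases le_or_gt 1 h with h1 | h1
  · apply hfour
    refine le_trans ?_ hs4
    have : h ^ (1 - b) ≤ 1 := Real.rpow_le_one_of_one_le_of_nonpos h1 (by linarith)
    nlinarith
  have hPQ : P < 4 * Q := by
    by_contra hc
    push Not at hc
    have h3 := le_two_mul_mul_sub hX hY hP hQ hP2 hQ2 hβ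
    have h4 : h ^ 2 < 1 := by rw [sq_lt_one_iff₀ hh0]; exact h1
    have h5 : 2 * Q * (P * Q - β) < 3 * Q := by
      have : 2 * (P * Q - β) < 3 := by linarith
      calc _ = Q * (2 * (P * Q - β)) := by ring
        _ < Q * 3 := by gcongr
        _ = _ := by ring
    linarith
  rcases eq_or_lt_of_le hx with hx1 | hx1
  · have : h = 0 := by
      rw [hh, hx0 hx1.symm]; simp
    rw [this, Real.zero_rpow (by linarith), zero_mul, zero_div]
    positivity
  set w := √(P * Q) with hw
  have hw2 : w ^ 2 = P * Q := Real.sq_sqrt (by linarith)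
  have hw1 : 1 ≤ w := Real.one_le_sqrt.2 hPQ1
  have hwQ : w ≤ 2 * Q := by
    apply Real.sqrt_le_iff.2
    constructor
    · linarith
    · calc P * Q ≤ 4 * Q * Q := by gcongr
        _ = _ := by ring
  have hsw : s ≤ 2 * w := by
    apply Real.sqrt_le_iff.2
    constructor
    · linarith
    · rw [mul_pow, hw2]; linarith
  have hDh : ε * x ^ 2 ≤ (h * w) ^ 2 := by
    rw [mul_pow, hh2, hw2]
    exact hD.trans (sub_le_two_mul_mul hP2 hQ2 hβ)
  have hlow : √ε * x / w ≤ h := by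
    rw [div_le_iff₀ (by linarith)]
    have := Real.sqrt_le_sqrt hDh
    rwa [Real.sqrt_mul hε.le, Real.sqrt_sq hx, Real.sqrt_sq (by positivity)] at this
  have hpow : h ^ (1 - b) ≤ √ε ^ (1 - b) * x ^ (1 - b) * w ^ 2 := by
    have hsε : 0 < √ε := Real.sqrt_pos.2 hε
    calc h ^ (1 - b) ≤ (√ε * x / w) ^ (1 - b) :=
          Real.rpow_le_rpow_of_nonpos (by positivity) hlow (by linarith)
      _ = √ε ^ (1 - b) * x ^ (1 - b) * w ^ (b - 1) := by
          rw [Real.div_rpow (by positivity) (by positivity), Real.mul_rpow hsε.le hx,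
            div_eq_mul_inv, ← Real.rpow_neg (by positivity)]
          congr 2; ring
      _ ≤ √ε ^ (1 - b) * x ^ (1 - b) * w ^ (2 : ℝ) := by
          gcongr
          · linarith
      _ = _ := by norm_cast
  have hxψ : x ^ (1 - b) ≤ 1 + ψ := by
    rcases lt_or_ge x 1 with hlt | hge
    · rw [hψd, indicator_of_mem (show x ∈ Iio (1 : ℝ) from hlt)]; linarith
    · have := Real.rpow_le_one_of_one_le_of_nonpos hge (show 1 - b ≤ 0 by linarith)
      linarith
  have hxp : 0 ≤ x ^ (1 - b) := Real.rpow_nonneg hx _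
  calc h ^ (1 - b) * s / (P * Q)
      ≤ √ε ^ (1 - b) * x ^ (1 - b) * w ^ 2 * (2 * w) / (P * Q) := by gcongr
    _ = √ε ^ (1 - b) * x ^ (1 - b) * 2 * w := by rw [← hw2]; field_simp
    _ ≤ √ε ^ (1 - b) * (1 + ψ) * 2 * (2 * Q) := by gcongr
    _ = (4 * √ε ^ (1 - b)) * Q * (1 + ψ) := by ring
    _ ≤ (4 + 4 * √ε ^ (1 - b)) * Q * (1 + ψ) := by gcongr; linarith

theorem posDef_of_quadG {G : Mat3} (hs : G.IsSymm) (hG : ∀ p, p ≠ 0 → 0 < quadG G p) :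
    G.PosDef := by
  refine Matrix.PosDef.of_dotProduct_mulVec_pos ?_ fun x hx => ?_
  · rw [Matrix.IsHermitian, conjTranspose_eq_transpose_of_trivial]; exact hs
  · simpa [quadG] using hG x hx

open scoped MatrixOrder in
/-- The quadratic form of `S` is bounded by the norm of `S` measured with the metric `G⁻¹`. -/
theorem quad_sq_le {G : Mat3} (hG : G.PosDef) (S : Mat3) (p : V3) :
    (p ⬝ᵥ S *ᵥ p) ^ 2 ≤ (∑ a, ∑ b, (G⁻¹ * S * G⁻¹) a b * S a b) * quadG G p ^ 2 := by
  obtain ⟨R, hR⟩ := CStarAlgebra.nonneg_iff_eq_star_mul_self.mp hG.posSemidef.nonneg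
  have hR' : G = Rᵀ * R := by
    rw [hR, star_eq_conjTranspose, conjTranspose_eq_transpose_of_trivial]
  have hRu : IsUnit R.det := by
    have := hG.det_pos
    rw [hR', det_mul, det_transpose] at this
    exact isUnit_iff_ne_zero.2 fun h => by simp [h] at this
  have hCR : R⁻¹ * R = 1 := nonsing_inv_mul _ hRu
  have hRC : Rᵀ * (R⁻¹)ᵀ = 1 := by rw [← transpose_mul, hCR, transpose_one]
  set C := R⁻¹
  have hGi : G⁻¹ = C * Cᵀ := by
    rw [hR', Matrix.mul_inv_rev, transpose_nonsing_inv]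
  set A := Cᵀ * S * C with hA
  have hS : S = Rᵀ * A * R := by
    rw [hA]
    calc S = 1 * S * 1 := by simp
      _ = (Rᵀ * Cᵀ) * S * (C * R) := by rw [hRC, hCR]
      _ = _ := by simp only [Matrix.mul_assoc]
  have hsum : ∑ a, ∑ b, (G⁻¹ * S * G⁻¹) a b * S a b = ∑ a, ∑ b, A a b ^ 2 := by
    have key : ∀ M N : Mat3, ∑ a, ∑ b, M a b * N a b = (M * Nᵀ).trace := by
      intro M N
      simp [Matrix.trace, Matrix.mul_apply]
    rw [key]
    simp only [pow_two]
    rw [key, hGi, hA]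
    simp only [transpose_mul, transpose_transpose, Matrix.mul_assoc]
    rw [Matrix.trace_mul_comm]
    simp only [Matrix.mul_assoc]
  set y := R *ᵥ p with hy
  have hGy : quadG G p = ∑ i, y i ^ 2 := by
    rw [quadG, hR', ← mulVec_mulVec, dotProduct_mulVec, vecMul_transpose]
    simp [dotProduct, pow_two, hy]
  have hSy : p ⬝ᵥ S *ᵥ p = ∑ i, y i * (A *ᵥ y) i := by
    rw [hS, ← mulVec_mulVec, ← mulVec_mulVec, dotProduct_mulVec, vecMul_transpose]
    rfl
  rw [hsum, hGy, hSy]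
  have h1 : (∑ i, y i * (A *ᵥ y) i) ^ 2 ≤ (∑ i, y i ^ 2) * ∑ i, (A *ᵥ y) i ^ 2 :=
    Finset.sum_mul_sq_le_sq_mul_sq _ _ _
  have h2 : ∑ i, (A *ᵥ y) i ^ 2 ≤ ∑ i, (∑ j, A i j ^ 2) * ∑ j, y j ^ 2 := by
    apply Finset.sum_le_sum
    intro i _
    exact Finset.sum_mul_sq_le_sq_mul_sq Finset.univ (A i) y
  rw [← Finset.sum_mul] at h2
  have h0 : 0 ≤ ∑ i, y i ^ 2 := Finset.sum_nonneg fun _ _ => sq_nonneg _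
  nlinarith

theorem lamEta_nonneg {G K : Mat3} {γ η Zη : ℝ} (hs : G.IsSymm)
    (hG : ∀ p, p ≠ 0 → 0 < quadG G p) (hγ : 0 < γ) (hη0 : 0 ≤ η) (hη1 : η < 1) (hZ : 0 ≤ Zη)
    (hH : γ ≤ Hub G K) (hF : Fvar G K ≤ η ^ 2 / 4) (p : V3) :
    0 ≤ lamEta G K γ η Zη p := by
  have hq : 0 ≤ quadG G p := by
    rcases eq_or_ne p 0 with rfl | h
    · simp [quadG]
    · exact (hG p h).le
  set H := Hub G K with hHd
  have hH0 : 0 < H := hγ.trans_le hH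
  have hsh : shearSq G K ≤ (η * H) ^ 2 := by
    rw [Fvar, div_le_iff₀ (by positivity)] at hF
    linarith
  have h1 := quad_sq_le (posDef_of_quadG hs hG) (shearUp G K) p
  change _ ≤ shearSq G K * _ at h1
  have h2 : |p ⬝ᵥ shearUp G K *ᵥ p| ≤ η * H * quadG G p := by
    apply abs_le_of_sq_le_sq _ (by positivity)
    nlinarith [sq_nonneg (quadG G p)]
  have h3 : quadK K p = p ⬝ᵥ shearUp G K *ᵥ p + H * quadG G p := by
    rw [shearUp, sub_mulVec, dotProduct_sub, smul_mulVec, dotProduct_smul, quadK, quadG,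
      smul_eq_mul]
    ring
  have h4 : (1 - η) * γ * quadG G p ≤ quadK K p := by
    have := (abs_le.1 h2).1
    have : (1 - η) * γ * quadG G p ≤ (1 - η) * H * quadG G p := by
      have : 0 ≤ 1 - η := by linarith
      gcongr
    linarith
  have hp1 : 1 ≤ p0 G p := Real.one_le_sqrt.2 (by linarith)
  have hp2 : p0 G p ^ 2 = 1 + quadG G p := Real.sq_sqrt (by linarith)
  have h5 : (1 - η) * γ * (p0 G p - 1) ≤ quadK K p / p0 G p := by
    rw [le_div_iff₀ (by linarith)]
    refine le_trans ?_ h4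
    have : 0 ≤ (1 - η) * γ := mul_nonneg (by linarith) hγ.le
    calc (1 - η) * γ * (p0 G p - 1) * p0 G p = (1 - η) * γ * ((p0 G p - 1) * p0 G p) := by ring
      _ ≤ (1 - η) * γ * quadG G p := by
        apply mul_le_mul_of_nonneg_left _ this
        nlinarith
  rw [lamEta]
  apply mul_nonneg _ hZ
  linarith

theorem jap_pos (p : V3) : 0 < jap p :=
  Real.sqrt_pos.2 (by
    have : 0 ≤ enorm2 p := Finset.sum_nonneg fun _ _ => sq_nonneg _
    linarith)

theorem quadG_nonneg_of_le {G : Mat3} {ε : ℝ} (hε : 0 < ε)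
    (hlo : ∀ p, ε * enorm2 p ≤ quadG G p) (p : V3) : 0 ≤ quadG G p :=
  le_trans (mul_nonneg hε.le (Finset.sum_nonneg fun _ _ => sq_nonneg _)) (hlo p)

theorem quadG_pos_of_le {G : Mat3} {ε : ℝ} (hε : 0 < ε)
    (hlo : ∀ p, ε * enorm2 p ≤ quadG G p) (p : V3) (hp : p ≠ 0) : 0 < quadG G p := by
  refine lt_of_lt_of_le (mul_pos hε ?_) (hlo p)
  exact lt_of_lt_of_le (by have := norm_pos_iff.2 hp; positivity) (norm_sq_le_enorm2 p)

theorem enorm2_sphV (ω : Sph) : enorm2 (sphV ω) = 1 := by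
  have h : ‖(ω : EuclideanSpace ℝ (Fin 3))‖ = 1 := by simp
  have h2 := EuclideanSpace.real_norm_sq_eq (ω : EuclideanSpace ℝ (Fin 3))
  rw [h] at h2
  rw [enorm2]
  simpa [sphV] using h2.symm

theorem jap_le_post {G : Mat3} {ε c : ℝ} (hs : G.IsSymm) (hε : 0 < ε) (hε1 : ε ≤ 1) (hc : 1 ≤ c)
    (hlo : ∀ p, ε * enorm2 p ≤ quadG G p) (hhi : ∀ p, quadG G p ≤ c * enorm2 p)
    (p q : V3) (ω : Sph) :
    jap p ≤ 2 * c / √ε * (jap (pPost G p q (sphV ω)) * jap (qPost G p q (sphV ω))) := by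
  have hG := quadG_nonneg_of_le hε hlo
  have hen : ∀ p, 0 ≤ enorm2 p := fun p => Finset.sum_nonneg fun _ _ => sq_nonneg _
  have hv : quadG G (eoV G (sphV ω)) = 1 := by
    rw [quadG_eoV hs (quadG_pos_of_le hε hlo), enorm2_sphV]
  have h1 := p0_add_p0_le_post hs hG p q (sphV ω) hv
  have hup : ∀ u, p0 G u ≤ √c * jap u := by
    intro u
    rw [jap, ← Real.sqrt_mul (by linarith), p0]
    apply Real.sqrt_le_sqrt
    linarith [hhi u]
  have hdown : √ε * jap p ≤ p0 G p := by
    rw [jap, ← Real.sqrt_mul (by linarith), p0]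
    apply Real.sqrt_le_sqrt
    linarith [hlo p]
  have hq1 := one_le_p0 hG q
  set u := pPost G p q (sphV ω)
  set v := qPost G p q (sphV ω)
  have hu1 := one_le_p0 hG u
  have hv1 := one_le_p0 hG v
  have h2 : p0 G p ≤ 2 * (p0 G u * p0 G v) := by nlinarith
  have h3 : p0 G u * p0 G v ≤ c * (jap u * jap v) := by
    have hju := jap_pos u
    calc _ ≤ (√c * jap u) * (√c * jap v) := by
          apply mul_le_mul (hup u) (hup v) (by linarith) (by positivity)
      _ = (√c * √c) * (jap u * jap v) := by ring
      _ = _ := by rw [Real.mul_self_sqrt (by linarith)]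
  have he : 0 < √ε := Real.sqrt_pos.2 hε
  rw [div_mul_eq_mul_div, le_div_iff₀ he]
  linarith

theorem collKer_nonneg {G : Mat3} (hG : ∀ p, 0 ≤ quadG G p) (b : ℝ) (p q : V3) :
    0 ≤ collKer G b p q := by
  have hP1 := one_le_p0 hG p
  have hQ1 := one_le_p0 hG q
  have := Real.rpow_nonneg (Real.sqrt_nonneg (-(p0 G p - p0 G q) ^ 2 + quadG G (p - q))) (1 - b)
  rw [collKer, hrel]
  positivity

theorem collKer_mul_winv_le {G : Mat3} {ε b Zη : ℝ} (hs : G.IsSymm) (hε : 0 < ε) (hε1 : ε ≤ 1)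
    (hlo : ∀ p, ε * enorm2 p ≤ quadG G p) (hb0 : 0 ≤ b) (hb3 : b < 3) (hZ : 1 ≤ Zη) (p q : V3) :
    collKer G b p q * winv G Zη q ≤ (4 + 4 * √ε ^ (1 - b)) *
      ((120 * Real.exp 1 * (4 / ε ^ 2)) * (1 + ‖q‖) ^ (-(4 : ℝ)) +
        (Iio (1 : ℝ)).indicator (fun r => r ^ (1 - b)) ‖p - q‖) := by
  have hG := quadG_nonneg_of_le hε hlo
  have hP1 := one_le_p0 hG p
  have hQ1 := one_le_p0 hG q
  have hP2 := p0_sq hG p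
  have hQ2 := p0_sq hG q
  have hk : collKer G b p q ≤ (4 + 4 * √ε ^ (1 - b)) * p0 G q *
      (1 + (Iio (1 : ℝ)).indicator (fun r => r ^ (1 - b)) ‖p - q‖) := by
    have hh : -(p0 G p - p0 G q) ^ 2 + quadG G (p - q) =
        2 * (p0 G p * p0 G q - 1 - p ⬝ᵥ G *ᵥ q) := by
      rw [quadG_sub hs]; linarith
    rw [collKer, hrel, hh, sCM_eq hs hG]
    refine kernel_le hb3 hb0 ?_ (hG p) (hG q) hP1 hQ1 hP2 hQ2 (bilin_sq_le hs hG p q)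
      (one_add_bilin_le hs hG p q) hε (norm_nonneg _) ?_
    · intro h
      obtain rfl : p = q := sub_eq_zero.1 (norm_eq_zero.1 h)
      rw [← pow_two, hP2]; rfl
    · have := hlo (p - q)
      rw [quadG_sub hs] at this
      have h2 := norm_sq_le_enorm2 (p - q)
      have : ε * ‖p - q‖ ^ 2 ≤ ε * enorm2 (p - q) := by gcongr
      linarith
  have hψ : 0 ≤ (Iio (1 : ℝ)).indicator (fun r => r ^ (1 - b)) ‖p - q‖ := by
    rw [indicator_apply]; split_ifs
    · exact Real.rpow_nonneg (norm_nonneg _) _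
    · exact le_rfl
  set ψ := (Iio (1 : ℝ)).indicator (fun r => r ^ (1 - b)) ‖p - q‖
  have hA : 0 ≤ 4 + 4 * √ε ^ (1 - b) := by positivity
  set A := 4 + 4 * √ε ^ (1 - b)
  have hw : winv G Zη q ≤ Real.exp (-(p0 G q - 1)) := by
    rw [winv]
    apply Real.exp_le_exp.2
    nlinarith
  have he : p0 G q * Real.exp (-(p0 G q - 1)) ≤
      (120 * Real.exp 1 * (4 / ε ^ 2)) * (1 + ‖q‖) ^ (-(4 : ℝ)) := by
    refine mul_exp_le hε hε1 (norm_nonneg _) (by linarith) ?_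
    have h2 := norm_sq_le_enorm2 q
    have : ε * ‖q‖ ^ 2 ≤ ε * enorm2 q := by gcongr
    linarith [hlo q]
  have he1 : p0 G q * Real.exp (-(p0 G q - 1)) ≤ 1 := by
    rw [Real.exp_neg, ← div_eq_mul_inv, div_le_one (Real.exp_pos _)]
    linarith [Real.add_one_le_exp (p0 G q - 1)]
  calc collKer G b p q * winv G Zη q
      ≤ A * p0 G q * (1 + ψ) * Real.exp (-(p0 G q - 1)) :=
        mul_le_mul hk hw (Real.exp_pos _).le (by positivity)
    _ = A * (p0 G q * Real.exp (-(p0 G q - 1)) + p0 G q * Real.exp (-(p0 G q - 1)) * ψ) := by ring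
    _ ≤ A * ((120 * Real.exp 1 * (4 / ε ^ 2)) * (1 + ‖q‖) ^ (-(4 : ℝ)) + 1 * ψ) := by gcongr
    _ = _ := by rw [one_mul]

theorem integral_le_integral_of_le {α : Type*} [MeasurableSpace α] {μ : Measure α} {u v : α → ℝ}
    (hv : Integrable v μ) (hv0 : ∀ x, 0 ≤ v x) (huv : ∀ x, u x ≤ v x) :
    ∫ x, u x ∂μ ≤ ∫ x, v x ∂μ := by
  by_cases hu : Integrable u μ
  · exact integral_mono hu hv huv
  · rw [integral_undef hu]
    exact integral_nonneg hv0

theorem exists_gammaIter_bound {ε c b m Δ : ℝ} (hε : 0 < ε) (hε1 : ε ≤ 1) (hc : 1 ≤ c)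
    (hb0 : 0 ≤ b) (hb3 : b < 3) (hm : 0 ≤ m) :
    ∃ L, 0 ≤ L ∧ ∀ G : Mat3, G.IsSymm → (∀ p, ε * enorm2 p ≤ quadG G p) →
      (∀ p, quadG G p ≤ c * enorm2 p) → G.det ≤ Δ → ∀ Zη, 1 ≤ Zη → ∀ (fn : V3 → ℝ) (fval D : ℝ),
      (∀ p, 0 ≤ fn p) → 0 ≤ fval → (∀ p, jap p ^ m * fn p ≤ D) →
      ∀ p, jap p ^ m * GammaIter G Zη b fn fval p ≤ L * D ^ 2 := by
  set A := 4 + 4 * √ε ^ (1 - b) with hAd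
  set E := 120 * Real.exp 1 * (4 / ε ^ 2) with hEd
  have hA : 0 ≤ A := by positivity
  have hE : 0 ≤ E := by positivity
  set ψ : V3 → ℝ := fun x => (Iio (1 : ℝ)).indicator (fun r => r ^ (1 - b)) ‖x‖ with hψd
  have hψ0 : ∀ x, 0 ≤ ψ x := by
    intro x
    simp only [hψd, indicator_apply]; split_ifs
    · exact Real.rpow_nonneg (norm_nonneg _) _
    · exact le_rfl
  have hψi : Integrable ψ := integrable_truncated_rpow_norm hb3
  set φ : V3 → ℝ := fun x => (1 + ‖x‖) ^ (-(4 : ℝ)) with hφd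
  have hφi : Integrable φ := integrable_one_add_norm (by norm_num)
  have hφ0 : ∀ x, 0 ≤ φ x := fun x => Real.rpow_nonneg (by positivity) _
  set J := A * (E * ∫ x, φ x) + A * ∫ x, ψ x with hJd
  have hJ : 0 ≤ J := by
    have h1 := integral_nonneg (μ := volume) (f := φ) (fun x => hφ0 x)
    have h2 := integral_nonneg (μ := volume) (f := ψ) (fun x => hψ0 x)
    positivity
  set K := 2 * c / √ε with hKd
  have hK : 0 ≤ K := by positivity
  set σ := sphMeasure.real univ with hσ
  have hσ0 : 0 ≤ σ := measureReal_nonneg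
  have hfin : IsFiniteMeasure sphMeasure := by unfold sphMeasure; infer_instance
  refine ⟨√Δ * (K ^ m * σ * J), by positivity, ?_⟩
  intro G hs hlo hhi hdet Zη hZ fn fval D hfn hfval hD p
  have hG := quadG_nonneg_of_le hε hlo
  have hD0 : 0 ≤ D := le_trans (mul_nonneg (Real.rpow_nonneg (jap_pos 0).le _) (hfn 0)) (hD 0)
  have hjm : ∀ u, 0 < jap u ^ m := fun u => Real.rpow_pos_of_pos (jap_pos u) _
  set N := K ^ m * D ^ 2 / jap p ^ m with hN
  have hN0 : 0 ≤ N := by have := hjm p; positivity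
  have hgain : ∀ q (ω : Sph), fn (pPost G p q (sphV ω)) * fn (qPost G p q (sphV ω)) ≤ N := by
    intro q ω
    have h1 := jap_le_post hs hε hε1 hc hlo hhi p q ω
    set u := pPost G p q (sphV ω)
    set v := qPost G p q (sphV ω)
    have hju := jap_pos u
    have hjv := jap_pos v
    have h2 : jap p ^ m ≤ K ^ m * (jap u ^ m * jap v ^ m) := by
      have := Real.rpow_le_rpow (jap_pos p).le h1 hm
      rwa [Real.mul_rpow hK (by positivity), Real.mul_rpow hju.le hjv.le] at this
    rw [hN, le_div_iff₀ (hjm p)]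
    have h3 : 0 ≤ fn u * fn v := mul_nonneg (hfn u) (hfn v)
    calc fn u * fn v * jap p ^ m
        ≤ fn u * fn v * (K ^ m * (jap u ^ m * jap v ^ m)) := by gcongr
      _ = K ^ m * ((jap u ^ m * fn u) * (jap v ^ m * fn v)) := by ring
      _ ≤ K ^ m * (D * D) := by
          have h5 := mul_le_mul (hD u) (hD v) (mul_nonneg (hjm v).le (hfn v)) hD0
          gcongr
      _ = _ := by ring
  have hinner : ∀ q, (∫ ω : Sph, collKer G b p q *
        (fn (pPost G p q (sphV ω)) * fn (qPost G p q (sphV ω)) - fval * fn q) ∂sphMeasure) ≤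
        collKer G b p q * N * σ := by
    intro q
    have hk := collKer_nonneg hG b p q
    calc _ ≤ ∫ _ : Sph, collKer G b p q * N ∂sphMeasure := by
          apply integral_le_integral_of_le (integrable_const _) (fun _ => by positivity)
          intro ω
          have := mul_nonneg hfval (hfn q)
          gcongr
          linarith [hgain q ω]
      _ = _ := by rw [integral_const, smul_eq_mul, ← hσ]; ring
  have hi1 : Integrable (fun q => A * (E * φ q)) := (hφi.const_mul E).const_mul A
  have hi2 : Integrable (fun q => A * ψ (p - q)) := (hψi.comp_sub_left p).const_mul A
  have hint : Integrable (fun q => N * σ * (A * (E * φ q) + A * ψ (p - q))) :=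
    (hi1.add hi2).const_mul _
  have houter : (∫ q : V3, (∫ ω : Sph, collKer G b p q *
        (fn (pPost G p q (sphV ω)) * fn (qPost G p q (sphV ω)) - fval * fn q) ∂sphMeasure)
      * winv G Zη q) ≤ N * σ * J := by
    calc _ ≤ ∫ q, N * σ * (A * (E * φ q) + A * ψ (p - q)) := by
          apply integral_le_integral_of_le hint
          · intro q
            have := hφ0 q
            have := hψ0 (p - q)
            positivity
          · intro q
            have hw : 0 ≤ winv G Zη q := (Real.exp_pos _).le
            have h1 := collKer_mul_winv_le hs hε hε1 hlo hb0 hb3 hZ p q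
            calc _ ≤ collKer G b p q * N * σ * winv G Zη q := by gcongr; exact hinner q
              _ = N * σ * (collKer G b p q * winv G Zη q) := by ring
              _ ≤ N * σ * (A * (E * φ q + ψ (p - q))) := by gcongr
              _ = _ := by ring
      _ = N * σ * J := by
          rw [integral_const_mul, integral_add hi1 hi2, integral_const_mul, integral_const_mul,
            integral_const_mul, integral_sub_left_eq_self ψ volume p]
  have hΔ : √G.det ≤ √Δ := Real.sqrt_le_sqrt hdet
  rw [GammaIter]
  calc _ ≤ jap p ^ m * (√Δ * (N * σ * J)) := by
        have := (hjm p).le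
        gcongr ?_ * ?_
        refine le_trans (mul_le_mul_of_nonneg_left houter (Real.sqrt_nonneg _)) ?_
        gcongr
    _ = √Δ * (K ^ m * σ * J) * D ^ 2 := by
        rw [hN]
        have := (hjm p).ne'
        field_simp

/-- uniform bound for the iteration for the weighted Boltzmann equation.
Under the stated bounds on the Bianchi I data `g, k` on `[t₀,T]`, if `‖f₀‖_{L^∞_m} ≤ B`
and `(f_n)` is the standard iteration, then for every `C₂ > 1` there is `T₁ ∈ (t₀,T]`
with `sup_{t₀ ≤ s ≤ T₁} ‖f_n(s)‖_{L^∞_m} ≤ C₂ B` for all `n`. -/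
theorem stmt10 (γ η b c₁ t₀ T B m : ℝ)
    (hγ : 0 < γ) (hη0 : 0 ≤ η) (hη1 : η < 1) (hb0 : 0 ≤ b) (hb3 : b < 3)
    (hc₁ : 1 ≤ c₁) (ht₀ : 0 ≤ t₀) (hT : t₀ < T) (hm : 0 ≤ m)
    (g k : ℝ → Mat3)
    (hgcont : ∀ a b' : Fin 3, ContinuousOn (fun t => g t a b') (Icc t₀ T))
    (hkcont : ∀ a b' : Fin 3, ContinuousOn (fun t => k t a b') (Icc t₀ T))
    (hgsymm : ∀ t ∈ Icc t₀ T, (g t).IsSymm)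
    (hksymm : ∀ t ∈ Icc t₀ T, (k t).IsSymm)
    (hgbound : ∀ t ∈ Icc t₀ T, ∀ p : V3,
      (1 / c₁) * enorm2 p ≤ Zfun γ t ^ 2 * quadG (g t) p ∧
      Zfun γ t ^ 2 * quadG (g t) p ≤ c₁ * enorm2 p)
    (hkbound : ∀ t ∈ Icc t₀ T, ∀ a b' : Fin 3, |k t a b'| ≤ c₁ / Zfun γ t ^ 2)
    (hH : ∀ t ∈ Icc t₀ T, γ ≤ Hub (g t) (k t))
    (hF : ∀ t ∈ Icc t₀ T, Fvar (g t) (k t) ≤ η ^ 2 / 4)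
    (f₀ : V3 → ℝ) (hf₀pos : ∀ p, 0 ≤ f₀ p) (hf₀B : ∀ p, jap p ^ m * |f₀ p| ≤ B)
    (f : ℕ → ℝ → V3 → ℝ)
    (hfz : ∀ t p, f 0 t p = f₀ p)
    (hfpos : ∀ n, ∀ t ∈ Icc t₀ T, ∀ p, 0 ≤ f n t p)
    (hfcont : ∀ n, ContinuousOn (fun tp : ℝ × V3 => f n tp.1 tp.2) (Icc t₀ T ×ˢ univ))
    (hfinit : ∀ n p, f (n + 1) t₀ p = f₀ p)
    (hfode : ∀ n, ∀ t ∈ Icc t₀ T, ∀ p,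
      HasDerivWithinAt (fun s => f (n + 1) s p)
        (-(lamEta (g t) (k t) γ η (Zeta γ η t) p) * f (n + 1) t p
          + GammaIter (g t) (Zeta γ η t) b (f n t) (f (n + 1) t p) p)
        (Icc t₀ T) t) :
    ∀ C₂ : ℝ, 1 < C₂ → ∃ T₁, t₀ < T₁ ∧ T₁ ≤ T ∧
      ∀ n, ∀ s ∈ Icc t₀ T₁, ∀ p : V3, jap p ^ m * |f n s p| ≤ C₂ * B := by
  intro C₂ hC₂
  have hTm : T ∈ Icc t₀ T := ⟨hT.le, le_rfl⟩
  have hB : 0 ≤ B :=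
    le_trans (mul_nonneg (Real.rpow_nonneg (jap_pos 0).le _) (abs_nonneg _)) (hf₀B 0)
  have hZT : 1 ≤ Zfun γ T := Real.one_le_exp (mul_nonneg hγ.le (by linarith))
  set ε := 1 / (c₁ * Zfun γ T ^ 2) with hεd
  have hε : 0 < ε := by positivity
  have hε1 : ε ≤ 1 := by
    rw [hεd, div_le_one (by positivity)]
    nlinarith
  have hen : ∀ p, 0 ≤ enorm2 p := fun p => Finset.sum_nonneg fun _ _ => sq_nonneg _
  have hlo : ∀ t ∈ Icc t₀ T, ∀ p, ε * enorm2 p ≤ quadG (g t) p := by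
    intro t ht p
    have h1 := (hgbound t ht p).1
    have hZ : 0 < Zfun γ t := Real.exp_pos _
    have hZle : Zfun γ t ≤ Zfun γ T := Real.exp_le_exp.2 (by have := ht.2; gcongr)
    have hq : 0 ≤ quadG (g t) p := by
      have : 0 ≤ Zfun γ t ^ 2 * quadG (g t) p := le_trans (by have := hen p; positivity) h1
      exact nonneg_of_mul_nonneg_right this (by positivity)
    have h2 : (1 / c₁) * enorm2 p ≤ Zfun γ T ^ 2 * quadG (g t) p := h1.trans (by gcongr)
    calc ε * enorm2 p = (1 / c₁) * enorm2 p / Zfun γ T ^ 2 := by rw [hεd]; field_simp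
      _ ≤ quadG (g t) p := by rw [div_le_iff₀ (by positivity)]; linarith
  have hhi : ∀ t ∈ Icc t₀ T, ∀ p, quadG (g t) p ≤ c₁ * enorm2 p := by
    intro t ht p
    refine le_trans ?_ (hgbound t ht p).2
    have hZ : 1 ≤ Zfun γ t := Real.one_le_exp (mul_nonneg hγ.le (by linarith [ht.1]))
    have hq := quadG_nonneg_of_le hε (hlo t ht) p
    nlinarith [one_le_pow₀ (n := 2) hZ]
  have hdetc : ContinuousOn (fun t => (g t).det) (Icc t₀ T) := by
    have : ContinuousOn g (Icc t₀ T) :=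
      continuousOn_pi.2 fun a => continuousOn_pi.2 fun b' => hgcont a b'
    exact (Continuous.matrix_det continuous_id).comp_continuousOn this
  obtain ⟨Δ, hΔ⟩ := isCompact_Icc.bddAbove_image hdetc
  obtain ⟨L, hL, hΓ⟩ := exists_gammaIter_bound (Δ := Δ) hε hε1 hc₁ hb0 hb3 hm
  set M := L * (C₂ * B) ^ 2 with hM
  have hM0 : 0 ≤ M := by positivity
  set δ := (C₂ - 1) / (L * C₂ ^ 2 * B + 1) with hδ
  have hδ0 : 0 < δ := div_pos (by linarith) (by positivity)
  have hδM : M * δ ≤ (C₂ - 1) * B := by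
    rw [hδ, mul_div_assoc', div_le_iff₀ (by positivity), hM]
    have h1 : 0 ≤ (C₂ - 1) * B := mul_nonneg (by linarith) hB
    linarith
  refine ⟨min T (t₀ + δ), lt_min hT (by linarith), min_le_left _ _, ?_⟩
  intro n
  induction n with
  | zero =>
    intro s _ p
    rw [hfz]
    exact (hf₀B p).trans (by nlinarith)
  | succ n ih =>
    intro s hs p
    set T₁ := min T (t₀ + δ) with hT₁
    have hsub : Icc t₀ T₁ ⊆ Icc t₀ T := Icc_subset_Icc le_rfl (min_le_left _ _)
    have hjp : 0 < jap p ^ m := Real.rpow_pos_of_pos (jap_pos p) _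
    have hder : ∀ t ∈ Icc t₀ T₁, HasDerivWithinAt (fun s => f (n + 1) s p)
        (-(lamEta (g t) (k t) γ η (Zeta γ η t) p) * f (n + 1) t p
          + GammaIter (g t) (Zeta γ η t) b (f n t) (f (n + 1) t p) p) (Icc t₀ T₁) t :=
      fun t ht => (hfode n t (hsub ht) p).mono hsub
    have hmono := (convex_Icc t₀ T₁).image_sub_le_mul_sub_of_deriv_le
      (f := fun s => f (n + 1) s p) (C := M / jap p ^ m)
      (fun t ht => (hder t ht).continuousWithinAt)
      (fun t ht => ((hder t (interior_subset ht)).mono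
        interior_subset).differentiableWithinAt) (by
        intro t ht
        have htI := interior_subset ht
        have htT := hsub htI
        rw [((hder t htI).hasDerivAt (mem_interior_iff_mem_nhds.1 ht)).deriv]
        have hZη : 1 ≤ Zeta γ η t :=
          Real.one_le_exp (mul_nonneg (mul_nonneg (by linarith) hγ.le) (by linarith [htT.1]))
        have hlam : 0 ≤ lamEta (g t) (k t) γ η (Zeta γ η t) p :=
          lamEta_nonneg (hgsymm t htT) (quadG_pos_of_le hε (hlo t htT)) hγ hη0 hη1
            (by linarith) (hH t htT) (hF t htT) p
        have h1 := mul_nonneg hlam (hfpos (n + 1) t htT p)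
        have h2 := hΓ (g t) (hgsymm t htT) (hlo t htT) (hhi t htT)
          (hΔ (mem_image_of_mem _ htT)) _ hZη (f n t) (f (n + 1) t p) (C₂ * B)
          (hfpos n t htT) (hfpos (n + 1) t htT p)
          (fun u => by
            have := ih t htI u
            rwa [abs_of_nonneg (hfpos n t htT u)] at this) p
        rw [mul_comm, ← le_div_iff₀ hjp] at h2
        linarith)
      t₀ ⟨le_rfl, hs.1.trans hs.2⟩ s hs hs.1
    rw [abs_of_nonneg (hfpos (n + 1) s (hsub hs) p)]
    have h0 := hf₀B p
    rw [abs_of_nonneg (hf₀pos p)] at h0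
    have hsδ : s - t₀ ≤ δ := by
      have := hs.2.trans (min_le_right _ _)
      linarith
    have h3 : f (n + 1) s p ≤ f₀ p + M / jap p ^ m * (s - t₀) := by
      have := hmono
      simp only [hfinit] at this
      linarith
    calc jap p ^ m * f (n + 1) s p
        ≤ jap p ^ m * (f₀ p + M / jap p ^ m * (s - t₀)) := by gcongr
      _ = jap p ^ m * f₀ p + M * (s - t₀) := by field_simp
      _ ≤ B + M * δ := by gcongr
      _ ≤ C₂ * B := by linarith
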